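/- Let G be a forest, that is, a finite simple graph with no cycles. Then G admits an adapted complex structure if and only if G has an even number of connected components and each connected component of G contains at most one vertex of even degree. -/

import Mathlib

/-!  Framework: the 2-step nilpotent Lie algebra `𝔫_G` associated to a finite simple
graph `G` (Dani–Mainkar construction), and adapted complex structures on it. -/

open scoped BigOperators

namespace GraphLie

variable {V : Type*} [Fintype V] [LinearOrder V]

/-- The underlying real vector space of the Lie algebra `𝔫_G` associated to a graph `G`:
real-valued functions on its basis `V ⊕ G.edgeSet` (vertices and edges). -/
abbrev Niln (G : SimpleGraph V) : Type _ := (V ⊕ G.edgeSet) → ℝ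

variable (G : SimpleGraph V) [DecidableRel G.Adj]

/-- The basis vector of `𝔫_G` corresponding to the vertex `v`. -/
noncomputable def vtx (v : V) : Niln G := Pi.single (Sum.inl v) 1

/-- The basis vector of `𝔫_G` corresponding to the edge `e`. -/
noncomputable def edg (e : G.edgeSet) : Niln G := Pi.single (Sum.inr e) 1

/-- The basis vector of `𝔫_G` corresponding to a vertex or an edge. -/
noncomputable def basisVec (b : V ⊕ G.edgeSet) : Niln G := Pi.single b 1

/-- The bracket of two vertex generators: for adjacent vertices `i < j` (with respect to
the chosen labeling of the vertices) `[v_i, v_j] = e_{i,j}` and `[v_j, v_i] = -e_{i,j}`;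
non-adjacent vertices commute. -/
noncomputable def bracketVtx (i j : V) : Niln G :=
  if h : G.Adj i j then
    (if i < j then edg G ⟨s(i, j), G.mem_edgeSet.mpr h⟩
     else - edg G ⟨s(i, j), G.mem_edgeSet.mpr h⟩)
  else 0

/-- The Lie bracket of `𝔫_G`, extended bilinearly from the generators; all the
edge generators are central. -/
noncomputable def bracket (x y : Niln G) : Niln G :=
  ∑ i : V, ∑ j : V, (x (Sum.inl i) * y (Sum.inl j)) • bracketVtx G i j

/-- An adapted complex structure on the graph `G`: a linear endomorphism `J` of `𝔫_G`
with `J ∘ J = -id`, whose Nijenhuis tensor vanishes, and which sends each basis vector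
(vertex or edge) to plus or minus a basis vector. -/
structure AdaptedCS : Type _ where
  J : Niln G →ₗ[ℝ] Niln G
  j_squared : ∀ x, J (J x) = -x
  integrable : ∀ x y,
    bracket G x y + J (bracket G (J x) y + bracket G x (J y)) - bracket G (J x) (J y) = 0
  adapted : ∀ b : V ⊕ G.edgeSet,
    (∃ b', J (basisVec G b) = basisVec G b') ∨ (∃ b', J (basisVec G b) = - basisVec G b')

variable {G}

/-- An edge of `G` joining vertices `v` and `w` is distinguished if `Jv = w` or `Jw = v`. -/
def AdaptedCS.Distinguished (Jc : AdaptedCS G) (e : G.edgeSet) : Prop :=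
  ∃ v w : V, (e : Sym2 V) = s(v, w) ∧
    (Jc.J (vtx G v) = vtx G w ∨ Jc.J (vtx G w) = vtx G v)

end GraphLie

/-- In an acyclic graph with a chosen root in each connected component, every vertex other than a
root has a parent of smaller depth, and every edge joins a vertex to its parent. -/
theorem SimpleGraph.IsAcyclic.exists_parent {V : Type*} {G : SimpleGraph V}
    (hG : G.IsAcyclic) (r : V → V) (hr : ∀ v, G.Reachable v (r v))
    (hadj : ∀ v w, G.Adj v w → r v = r w) :
    ∃ (p : V → V) (d : V → ℕ), (∀ v, v ≠ r v → G.Adj v (p v) ∧ d (p v) < d v) ∧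
      ∀ v w, G.Adj v w → (v ≠ r v ∧ p v = w) ∨ (w ≠ r w ∧ p w = v) := by
  choose f hf using fun v => (hr v).exists_isPath
  have huniq : ∀ {v x : V} (P : G.Walk v x), P.IsPath → x = r v →
      P.snd = (f v).snd ∧ P.length = (f v).length := by
    rintro v x P hP rfl
    have := congrArg Subtype.val ((hG.subsingleton_path _ _).elim ⟨P, hP⟩ ⟨f v, hf v⟩)
    simp only at this
    simp [this]
  refine ⟨fun v => (f v).snd, fun v => (f v).length, fun v hv => ?_, fun v w h => ?_⟩
  · have hnil : ¬ (f v).Nil := SimpleGraph.Walk.not_nil_of_ne hv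
    have had := (f v).adj_snd hnil
    refine ⟨had, ?_⟩
    have hlen := (huniq (f v).tail (hf v).tail (hadj _ _ had)).2
    have hlen' := SimpleGraph.Walk.length_tail_add_one hnil
    dsimp only
    omega
  · by_cases hw : w ∈ (f v).support
    · refine Or.inl ⟨fun hv => ?_, (hG.eq_snd_of_adj_start (hf v) h hw).symm⟩
      have := (huniq (SimpleGraph.Walk.nil : G.Walk v v) SimpleGraph.Walk.IsPath.nil hv).2
      have hnil := SimpleGraph.Walk.length_eq_zero_iff.1 this.symm
      have h2 := SimpleGraph.Walk.nil_iff_support_eq.1 hnil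
      rw [h2] at hw
      exact h.ne (List.mem_singleton.1 hw).symm
    · have hpath : ((f v).cons h.symm).IsPath := (hf v).cons hw
      refine Or.inr ⟨fun hwr => ?_, ?_⟩
      · apply hw
        rw [hwr, ← hadj v w h]
        exact (f v).end_mem_support
      · simpa using (huniq _ hpath (hadj v w h)).1.symm

/-- A finite forest satisfies `|E| + c = |V|`, where `c` is the number of components. -/
theorem SimpleGraph.IsAcyclic.card_edgeSet_add_card_connectedComponent {V : Type*} [Finite V]
    {G : SimpleGraph V} (hG : G.IsAcyclic) :
    Nat.card G.edgeSet + Nat.card G.ConnectedComponent = Nat.card V := by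
  classical
  let r : V → V := fun v => (G.connectedComponentMk v).out
  have hmk : ∀ v, G.connectedComponentMk (r v) = G.connectedComponentMk v := fun v => Quot.out_eq _
  obtain ⟨p, d, hp, hcov⟩ := hG.exists_parent r
    (fun v => (SimpleGraph.ConnectedComponent.exact (hmk v)).symm)
    (fun v w h => by simp only [r, SimpleGraph.ConnectedComponent.sound h.reachable])
  have hE : Nat.card {v // v ≠ r v} = Nat.card G.edgeSet := by
    refine Nat.card_eq_of_bijective
      (fun v => ⟨s(v.1, p v.1), G.mem_edgeSet.2 (hp v.1 v.2).1⟩) ⟨?_, ?_⟩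
    · rintro ⟨v, hv⟩ ⟨w, hw⟩ h
      simp only [Subtype.mk.injEq, Sym2.eq_iff] at h ⊢
      rcases h with h | ⟨h1, h2⟩
      · exact h.1
      · have hv2 := (hp v hv).2
        have hw2 := (hp w hw).2
        rw [h2] at hv2
        rw [← h1] at hw2
        omega
    · rintro ⟨e, he⟩
      induction e using Sym2.ind with
      | _ v w =>
        rcases hcov v w he with ⟨h1, h2⟩ | ⟨h1, h2⟩
        · exact ⟨⟨v, h1⟩, by simp [h2]⟩
        · exact ⟨⟨w, h1⟩, by simp [h2, Sym2.eq_swap]⟩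
  have hC : Nat.card {v // v = r v} = Nat.card G.ConnectedComponent := by
    refine Nat.card_eq_of_bijective (fun v => G.connectedComponentMk v.1) ⟨?_, ?_⟩
    · rintro ⟨v, hv⟩ ⟨w, hw⟩ h
      simp only [Subtype.mk.injEq] at h ⊢
      rw [hv, hw]
      simp only [r, h]
    · intro c
      refine ⟨⟨c.out, ?_⟩, Quot.out_eq c⟩
      exact congrArg Quot.out (Quot.out_eq c).symm
  rw [← hE, ← hC, add_comm, ← Nat.card_sum]
  exact Nat.card_congr (Equiv.sumCompl fun v => v = r v)

theorem SimpleGraph.IsAcyclic.not_triangle {V : Type*} {G : SimpleGraph V}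
    (hG : G.IsAcyclic) {a b x : V} (hab : G.Adj a b) (hax : G.Adj a x) (hxb : G.Adj x b) :
    False := by
  classical
  exact hG.cliqueFree le_rfl {a, b, x} (SimpleGraph.is3Clique_triple_iff.2 ⟨hab, hax, hxb.symm⟩)

theorem SimpleGraph.IsAcyclic.eq_of_adj_of_adj {V : Type*} {G : SimpleGraph V}
    (hG : G.IsAcyclic) {a b x y : V} (hab : a ≠ b) (hax : G.Adj a x) (hxb : G.Adj x b)
    (hay : G.Adj a y) (hyb : G.Adj y b) : x = y := by
  have key : ∀ z (h1 : G.Adj a z) (h2 : G.Adj z b),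
      (SimpleGraph.Walk.cons h1 h2.toWalk).IsPath := by
    intro z h1 h2
    simp [SimpleGraph.Walk.cons_isPath_iff, h1.ne, h2.ne, hab]
  have := congrArg (fun P => (Subtype.val P).snd)
    ((hG.subsingleton_path _ _).elim ⟨_, key x hax hxb⟩ ⟨_, key y hay hyb⟩)
  simpa using this

/-- A finite set with a fixed-point-free involution has an even number of elements. -/
theorem Finset.even_card_of_forall_involution {α : Type*} (S : Finset α) (σ : α → α)
    (hmem : ∀ a ∈ S, σ a ∈ S) (hne : ∀ a ∈ S, σ a ≠ a) (hinv : ∀ a ∈ S, σ (σ a) = a) :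
    Even S.card := by
  have : ∑ _a ∈ S, (1 : ZMod 2) = 0 :=
    Finset.sum_involution (fun a _ => σ a) (fun _ _ => by decide) (fun a ha _ => hne a ha)
      hmem hinv
  rw [Finset.sum_const, nsmul_one] at this
  exact (ZMod.natCast_eq_zero_iff_even).1 this

namespace GraphLie

/-- `σ` is a fixed-point-free involution of `S`, and the signs `s` are opposite on each orbit. -/
structure IsSignedInvolution {α : Type*} (S : Set α) (σ : α → α) (s : α → ℝ) : Prop where
  mem : ∀ a ∈ S, σ a ∈ S
  invol : ∀ a ∈ S, σ (σ a) = a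
  neg : ∀ a ∈ S, s (σ a) = - s a
  sign : ∀ a ∈ S, s a = 1 ∨ s a = -1

theorem IsSignedInvolution.ne {α : Type*} {S : Set α} {σ : α → α} {s : α → ℝ}
    (h : IsSignedInvolution S σ s) {a : α} (ha : a ∈ S) : σ a ≠ a := by
  intro heq
  have h1 := h.neg a ha
  rw [heq] at h1
  rcases h.sign a ha with h2 | h2 <;> rw [h2] at h1 <;> norm_num at h1

theorem IsSignedInvolution.ne_zero {α : Type*} {S : Set α} {σ : α → α} {s : α → ℝ}
    (h : IsSignedInvolution S σ s) {a : α} (ha : a ∈ S) : s a ≠ 0 := by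
  rcases h.sign a ha with h' | h' <;> rw [h'] <;> norm_num

theorem IsSignedInvolution.even_card {α : Type*} {S : Finset α} {σ : α → α} {s : α → ℝ}
    (h : IsSignedInvolution (S : Set α) σ s) : Even S.card :=
  S.even_card_of_forall_involution σ h.mem (fun _ ha => h.ne ha) h.invol

theorem exists_isSignedInvolution {α : Type*} (S : Finset α) (hS : Even S.card) :
    ∃ σ s, IsSignedInvolution (S : Set α) σ s := by
  classical
  obtain ⟨k, hk⟩ := hS
  let e : S ≃ Fin k ⊕ Fin k :=
    Fintype.equivOfCardEq (by simp [hk])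
  refine ⟨fun a => if h : a ∈ S then (e.symm (e ⟨a, h⟩).swap).1 else a,
    fun a => if h : a ∈ S then (e ⟨a, h⟩).elim (fun _ => 1) (fun _ => -1) else 0, ?_, ?_, ?_, ?_⟩
  · intro a (ha : a ∈ S)
    simp [ha]
  · intro a (ha : a ∈ S)
    simp [ha]
  · intro a (ha : a ∈ S)
    simp only [ha, dite_true, Finset.coe_mem, Subtype.coe_eta, Equiv.apply_symm_apply]
    rcases e ⟨a, ha⟩ with x | x <;> simp
  · intro a (ha : a ∈ S)
    simp only [ha, dite_true]
    rcases e ⟨a, ha⟩ with x | x <;> simp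

theorem IsSignedInvolution.exists_extension {α : Type*} [Fintype α] [DecidableEq α]
    (hα : Even (Fintype.card α)) {S : Finset α} {σ : α → α} {s : α → ℝ}
    (h : IsSignedInvolution (S : Set α) σ s) :
    ∃ σ' s', IsSignedInvolution Set.univ σ' s' ∧ ∀ a ∈ S, σ' a = σ a ∧ s' a = s a := by
  have hc : Even (Sᶜ).card := by
    rw [← Finset.card_add_card_compl S, Nat.even_add] at hα
    exact hα.1 h.even_card
  obtain ⟨σ', s', h'⟩ := exists_isSignedInvolution _ hc
  have hm : ∀ a ∈ S, σ a ∈ S := h.mem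
  have hm' : ∀ a, a ∉ S → σ' a ∉ S := fun a ha =>
    Finset.mem_compl.1 (h'.mem a (Finset.mem_coe.2 (Finset.mem_compl.2 ha)))
  refine ⟨fun a => if a ∈ S then σ a else σ' a, fun a => if a ∈ S then s a else s' a,
    ⟨fun _ _ => trivial, fun a _ => ?_, fun a _ => ?_, fun a _ => ?_⟩, fun a ha => by simp [ha]⟩
  all_goals by_cases ha : a ∈ S
  · simpa [ha, hm a ha] using h.invol a ha
  · simpa [ha, hm' a ha] using h'.invol a (by simpa using ha)
  · simpa [ha, hm a ha] using h.neg a ha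
  · simpa [ha, hm' a ha] using h'.neg a (by simpa using ha)
  · simpa [ha] using h.sign a ha
  · simpa [ha] using h'.sign a (by simpa using ha)

/-- If all fibres of `f` on `S` have even size, then `S` has a signed involution preserving `f`. -/
theorem exists_isSignedInvolution_of_even_fiber {α β : Type*} [DecidableEq β] (S : Finset α)
    (f : α → β) (hS : ∀ b, Even (S.filter (f · = b)).card) :
    ∃ σ s, IsSignedInvolution (S : Set α) σ s ∧ ∀ a ∈ S, f (σ a) = f a := by
  choose σ s h using fun b => exists_isSignedInvolution _ (hS b)
  have hm : ∀ a ∈ S, a ∈ ((S.filter (f · = f a) : Finset α) : Set α) := by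
    intro a ha; simp [ha]
  have hσ : ∀ a ∈ S, σ (f a) a ∈ S ∧ f (σ (f a) a) = f a := by
    intro a ha
    simpa using (h (f a)).mem a (hm a ha)
  refine ⟨fun a => σ (f a) a, fun a => s (f a) a, ⟨fun a ha => (hσ a ha).1, ?_, ?_, ?_⟩,
    fun a ha => (hσ a ha).2⟩
  · intro a ha
    simp only [(hσ a ha).2]
    exact (h (f a)).invol a (hm a ha)
  · intro a ha
    simp only [(hσ a ha).2]
    exact (h (f a)).neg a (hm a ha)
  · intro a ha
    exact (h (f a)).sign a (hm a ha)

open Sum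

section Parent

variable {V : Type*} {G : SimpleGraph V}

/-- The vertex `w` is the parent of `c` with respect to `σ` if `w` is adjacent to `c`, and is either
the partner of `c` or adjacent to the partner of `c`. -/
def IsParent (σ : V ⊕ G.edgeSet → V ⊕ G.edgeSet) (c w : V) : Prop :=
  G.Adj c w ∧ ∃ c', σ (inl c) = inl c' ∧ (w = c' ∨ G.Adj c' w)

variable {σ : V ⊕ G.edgeSet → V ⊕ G.edgeSet} {s : V ⊕ G.edgeSet → ℝ}

theorem IsParent.unique (hG : G.IsAcyclic) (hσ : IsSignedInvolution Set.univ σ s) {c w z : V}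
    (hw : IsParent σ c w) (hz : IsParent σ c z) : w = z := by
  obtain ⟨hcw, c', hc, hw⟩ := hw
  obtain ⟨hcz, c'', hc', hz⟩ := hz
  obtain rfl : c' = c'' := by simpa [hc] using hc'
  have hcc' : c ≠ c' := fun h => hσ.ne (Set.mem_univ (inl c)) (by rw [hc, h])
  rcases hw with rfl | hw <;> rcases hz with rfl | hz
  · rfl
  · exact (hG.not_triangle hcw hcz hz.symm).elim
  · exact (hG.not_triangle hcz hcw hw.symm).elim
  · exact hG.eq_of_adj_of_adj hcc' hcw hw.symm hcz hz.symm

theorem eq_or_exists_isParent_of_isPath (hG : G.IsAcyclic) (hσ : IsSignedInvolution Set.univ σ s)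
    (hcov : ∀ v w, G.Adj v w → IsParent σ v w ∨ IsParent σ w v) {u w : V} (P : G.Walk u w)
    (hP : P.IsPath) (hu : ∀ z, IsParent σ u z → z ∉ P.support) :
    u = w ∨ ∃ z, IsParent σ w z := by
  induction P with
  | nil => exact Or.inl rfl
  | @cons u u' w h P ih =>
    rw [SimpleGraph.Walk.cons_isPath_iff] at hP
    have hpar : IsParent σ u' u := (hcov u u' h).resolve_left fun h' =>
      hu u' h' (by simp)
    rcases ih hP.1 (fun z hz => hz.unique hG hσ hpar ▸ hP.2) with rfl | h'
    · exact Or.inr ⟨u, hpar⟩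
    · exact Or.inr h'

end Parent

section Bracket

variable {V : Type*} [LinearOrder V] {G : SimpleGraph V} [DecidableRel G.Adj]

theorem bracketVtx_swap (i j : V) : bracketVtx G j i = - bracketVtx G i j := by
  unfold bracketVtx
  by_cases h : G.Adj i j
  · have h' := h.symm
    rcases lt_or_gt_of_ne h.ne with hlt | hlt <;>
      simp [h, h', hlt, hlt.not_gt, Sym2.eq_swap (a := j) (b := i)]
  · have h' : ¬ G.Adj j i := fun h' => h h'.symm
    simp [h, h']

theorem bracketVtx_of_not_adj {i j : V} (h : ¬ G.Adj i j) : bracketVtx G i j = 0 := by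
  simp [bracketVtx, h]

theorem bracketVtx_of_adj {i j : V} (h : G.Adj i j) :
    bracketVtx G i j = (if i < j then (1 : ℝ) else -1) • basisVec G (inr ⟨s(i, j), h⟩) := by
  unfold bracketVtx
  split_ifs <;> simp [edg, basisVec]

theorem bracketVtx_apply_ne_zero_iff (i j : V) (e : G.edgeSet) :
    bracketVtx G i j (inr e) ≠ 0 ↔ (e : Sym2 V) = s(i, j) := by
  by_cases h : G.Adj i j
  · rw [bracketVtx_of_adj h]
    rcases e with ⟨e, he⟩
    by_cases heq : e = s(i, j)
    · subst heq
      simp only [basisVec, Pi.smul_apply, Pi.single_eq_same, iff_true]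
      split_ifs <;> simp
    · have hne : (⟨e, he⟩ : G.edgeSet) ≠ ⟨s(i, j), h⟩ := fun h' => heq (congrArg Subtype.val h')
      simp [basisVec, heq, hne]
  · rw [bracketVtx_of_not_adj h]
    simp only [Pi.zero_apply, ne_eq, not_true_eq_false, false_iff]
    intro heq
    exact h (G.mem_edgeSet.1 (heq ▸ e.2))

end Bracket

section ParentFun

variable {V : Type*} [Fintype V] (G : SimpleGraph V) [DecidableRel G.Adj]

/-- `q` assigns to every vertex of odd degree a neighbour, its parent, in such a way that every edge
joins a vertex of odd degree to its parent. -/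
structure IsParentFun (q : V → V) : Prop where
  adj : ∀ c, ¬ Even (G.degree c) → G.Adj c (q c)
  cover : ∀ v w, G.Adj v w → (¬ Even (G.degree v) ∧ q v = w) ∨ (¬ Even (G.degree w) ∧ q w = v)

/-- The vertices `w` and `q w` are parents of each other. -/
def IsMutual (q : V → V) (w : V) : Prop :=
  ¬ Even (G.degree w) ∧ ¬ Even (G.degree (q w)) ∧ q (q w) = w

variable {G}

theorem exists_isParentFun (hG : G.IsAcyclic)
    (huniq : ∀ v w : V, G.Reachable v w → Even (G.degree v) → Even (G.degree w) → v = w) :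
    ∃ q, IsParentFun G q := by
  classical
  have hroot : ∀ C : G.ConnectedComponent, ∃ x, G.connectedComponentMk x = C ∧
      ∀ v, G.connectedComponentMk v = C → Even (G.degree v) → v = x := by
    intro C
    by_cases h : ∃ x, G.connectedComponentMk x = C ∧ Even (G.degree x)
    · obtain ⟨x, hx, hx'⟩ := h
      exact ⟨x, hx, fun v hv hv' =>
        huniq v x (SimpleGraph.ConnectedComponent.exact (hv.trans hx.symm)) hv' hx'⟩
    · exact ⟨C.out, Quot.out_eq C, fun v hv hv' => (h ⟨v, hv, hv'⟩).elim⟩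
  choose ρ hρ hρ' using hroot
  let r : V → V := fun v => ρ (G.connectedComponentMk v)
  obtain ⟨p, d, hp, hcov⟩ := hG.exists_parent r
    (fun v => (SimpleGraph.ConnectedComponent.exact (hρ _)).symm)
    (fun v w h => by simp only [r, SimpleGraph.ConnectedComponent.sound h.reachable])
  have hodd : ∀ v, v ≠ r v → ¬ Even (G.degree v) := fun v hv he => hv (hρ' _ v rfl he)
  have hnbr : ∀ v, ∃ w, ¬ Even (G.degree v) → G.Adj v w := by
    intro v
    by_cases he : Even (G.degree v)
    · exact ⟨v, fun h => (h he).elim⟩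
    · obtain ⟨w, hw⟩ := (G.degree_pos_iff_exists_adj v).1 (Nat.not_even_iff_odd.1 he).pos
      exact ⟨w, fun _ => hw⟩
  choose n hn using hnbr
  refine ⟨fun v => if v = r v then n v else p v, fun c hc => ?_, fun v w h => ?_⟩
  · by_cases h : c = r c
    · simpa [← h] using hn c hc
    · simpa [h] using (hp c h).1
  · rcases hcov v w h with ⟨h1, h2⟩ | ⟨h1, h2⟩
    · exact Or.inl ⟨hodd v h1, by simp [h1, h2]⟩
    · exact Or.inr ⟨hodd w h1, by simp [h1, h2]⟩

variable {q : V → V}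

theorem IsMutual.apply {w : V} (h : IsMutual G q w) : IsMutual G q (q w) :=
  ⟨h.2.1, by rw [h.2.2]; exact h.1, by rw [h.2.2]⟩

/-- The vertices of odd degree carry a signed involution that exchanges mutual parents and
otherwise exchanges children of the same vertex. -/
theorem IsParentFun.exists_isSignedInvolution (hq : IsParentFun G q) :
    ∃ (σ : V → V) (s : V → ℝ), IsSignedInvolution {w | ¬ Even (G.degree w)} σ s ∧
      (∀ w, IsMutual G q w → σ w = q w) ∧
      ∀ w, ¬ Even (G.degree w) → ¬ IsMutual G q w → ¬ IsMutual G q (σ w) ∧ q (σ w) = q w := by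
  classical
  let f : V → V ⊕ Sym2 V := fun w => if IsMutual G q w then inr s(w, q w) else inl (q w)
  obtain ⟨σ, s, hσ, hf⟩ := exists_isSignedInvolution_of_even_fiber
    (Finset.univ.filter fun w => ¬ Even (G.degree w)) f (by
    rintro (c | e)
    · have hfib : ∀ w, w ∈ (Finset.univ.filter fun w => ¬ Even (G.degree w)).filter
          (f · = inl c) ↔ ¬ Even (G.degree w) ∧ ¬ IsMutual G q w ∧ q w = c := by
        intro w
        by_cases hm : IsMutual G q w <;> simp [f, hm]
      by_cases hc : Even (G.degree c)
      · convert hc using 1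
        rw [← G.card_neighborFinset_eq_degree]
        congr 1
        ext w
        rw [hfib, G.mem_neighborFinset]
        constructor
        · rintro ⟨h1, h2, rfl⟩
          exact (hq.adj w h1).symm
        · intro h
          rcases hq.cover c w h with ⟨h1, -⟩ | ⟨h1, rfl⟩
          · exact (h1 hc).elim
          · exact ⟨h1, fun hm => hm.2.1 hc, rfl⟩
      · have hmem := (G.mem_neighborFinset c (q c)).2 (hq.adj c hc)
        have hcard := Finset.card_erase_add_one hmem
        rw [G.card_neighborFinset_eq_degree] at hcard
        have heven : Even ((G.neighborFinset c).erase (q c)).card := by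
          rw [← hcard, Nat.even_add_one, not_not] at hc
          exact hc
        convert heven using 2
        ext w
        rw [hfib, Finset.mem_erase, G.mem_neighborFinset]
        constructor
        · rintro ⟨h1, h2, rfl⟩
          exact ⟨fun h => h2 ⟨h1, hc, h.symm⟩, (hq.adj w h1).symm⟩
        · rintro ⟨hne, h⟩
          rcases hq.cover c w h with ⟨-, h1⟩ | ⟨h1, rfl⟩
          · exact (hne h1.symm).elim
          · exact ⟨h1, fun hm => hne hm.2.2.symm, rfl⟩
    · have hfib : ∀ w, w ∈ (Finset.univ.filter fun w => ¬ Even (G.degree w)).filter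
          (f · = inr e) ↔ IsMutual G q w ∧ s(w, q w) = e := by
        intro w
        by_cases hm : IsMutual G q w
        · simp [f, hm, Nat.not_even_iff_odd.1 hm.1]
        · simp [f, hm]
      refine Finset.even_card_of_forall_involution _ q ?_ ?_ ?_
      · intro w hw
        rw [hfib] at hw ⊢
        exact ⟨hw.1.apply, by rw [hw.1.2.2, Sym2.eq_swap, hw.2]⟩
      · intro w hw
        rw [hfib] at hw
        exact (hq.adj w hw.1.1).ne'
      · intro w hw
        rw [hfib] at hw
        exact hw.1.2.2)
  simp only [Finset.mem_filter, Finset.mem_univ, true_and, Finset.coe_filter] at hσ hf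
  refine ⟨σ, s, hσ, fun w hw => ?_, fun w hw hm => ?_⟩
  · have h := hf w hw.1
    by_cases hm : IsMutual G q (σ w)
    · simp only [f, hw, hm, if_true, inr.injEq, Sym2.eq_iff] at h
      rcases h with ⟨h, -⟩ | ⟨h, -⟩
      · exact (hσ.ne hw.1 h).elim
      · exact h
    · simp [f, hw, hm] at h
  · have h := hf w hw
    by_cases hm' : IsMutual G q (σ w)
    · simp [f, hm, hm'] at h
    · exact ⟨hm', by simpa [f, hm, hm'] using h⟩

end ParentFun

section SignedPerm

variable {V : Type*} {G : SimpleGraph V} {σ : V ⊕ G.edgeSet → V ⊕ G.edgeSet}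
  {s : V ⊕ G.edgeSet → ℝ}

variable (G) in
/-- The endomorphism of `𝔫_G` sending the basis vector of `b` to `s b` times that of `σ b`, when `σ`
is an involution. -/
def signedPerm (σ : V ⊕ G.edgeSet → V ⊕ G.edgeSet) (s : V ⊕ G.edgeSet → ℝ) :
    Niln G →ₗ[ℝ] Niln G where
  toFun x b := s (σ b) * x (σ b)
  map_add' x y := by ext b; simp [mul_add]
  map_smul' c x := by ext b; simp [mul_left_comm]

theorem signedPerm_signedPerm (hσ : IsSignedInvolution Set.univ σ s) (x : Niln G) :
    signedPerm G σ s (signedPerm G σ s x) = -x := by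
  ext b
  simp only [signedPerm, LinearMap.coe_mk, AddHom.coe_mk, hσ.invol b trivial, hσ.neg b trivial,
    Pi.neg_apply]
  rcases hσ.sign b trivial with h | h <;> rw [h] <;> ring

theorem signedPerm_basisVec [LinearOrder V] (hσ : IsSignedInvolution Set.univ σ s)
    (b : V ⊕ G.edgeSet) :
    signedPerm G σ s (basisVec G b) = s b • basisVec G (σ b) := by
  ext b'
  by_cases h : b' = σ b
  · subst h
    simp [signedPerm, basisVec, hσ.invol b trivial]
  · have h' : σ b' ≠ b := by
      rintro rfl
      exact h (hσ.invol b' trivial).symm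
    simp [signedPerm, basisVec, h, h']

end SignedPerm

variable {V : Type*} [Fintype V] [LinearOrder V] {G : SimpleGraph V} [DecidableRel G.Adj]

variable (G) in
/-- The Lie bracket of `𝔫_G` as a bilinear map. -/
noncomputable def bracketHom : Niln G →ₗ[ℝ] Niln G →ₗ[ℝ] Niln G :=
  LinearMap.mk₂ ℝ (bracket G)
    (fun x x' y => by simp [bracket, add_mul, add_smul, Finset.sum_add_distrib])
    (fun c x y => by simp [bracket, Finset.smul_sum, smul_smul, mul_assoc])
    (fun x y y' => by simp [bracket, mul_add, add_smul, Finset.sum_add_distrib])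
    (fun c x y => by simp [bracket, Finset.smul_sum, smul_smul, mul_left_comm])

theorem bracketHom_apply (x y : Niln G) : bracketHom G x y = bracket G x y := rfl

theorem bracket_swap (x y : Niln G) : bracket G y x = - bracket G x y := by
  unfold bracket
  rw [Finset.sum_comm, ← Finset.sum_neg_distrib]
  refine Finset.sum_congr rfl fun i _ => ?_
  rw [← Finset.sum_neg_distrib]
  refine Finset.sum_congr rfl fun j _ => ?_
  rw [bracketVtx_swap i j, smul_neg, mul_comm]

theorem bracket_basisVec_inl (i j : V) :
    bracket G (basisVec G (inl i)) (basisVec G (inl j)) = bracketVtx G i j := by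
  simp [bracket, basisVec, Pi.single_apply, ite_smul]

theorem bracket_basisVec_inr_left (e : G.edgeSet) (y : Niln G) :
    bracket G (basisVec G (inr e)) y = 0 := by
  simp [bracket, basisVec]

theorem bracket_basisVec_eq_zero {b b' : V ⊕ G.edgeSet}
    (h : ∀ i j, b = inl i → b' = inl j → ¬ G.Adj i j) :
    bracket G (basisVec G b) (basisVec G b') = 0 := by
  rcases b with i | e
  · rcases b' with j | e
    · rw [bracket_basisVec_inl, bracketVtx_of_not_adj (h i j rfl rfl)]
    · rw [bracket_swap, bracket_basisVec_inr_left, neg_zero]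
  · exact bracket_basisVec_inr_left _ _

theorem AdaptedCS.exists_isSignedInvolution (Jc : AdaptedCS G) :
    ∃ (σ : V ⊕ G.edgeSet → V ⊕ G.edgeSet) (s : V ⊕ G.edgeSet → ℝ),
      IsSignedInvolution Set.univ σ s ∧ ∀ b, Jc.J (basisVec G b) = s b • basisVec G (σ b) := by
  have h : ∀ b, ∃ (b' : V ⊕ G.edgeSet) (t : ℝ), (t = 1 ∨ t = -1) ∧
      Jc.J (basisVec G b) = t • basisVec G b' := by
    intro b
    rcases Jc.adapted b with ⟨b', h⟩ | ⟨b', h⟩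
    · exact ⟨b', 1, Or.inl rfl, by simp [h]⟩
    · exact ⟨b', -1, Or.inr rfl, by simp [h]⟩
  choose σ s hs hJ using h
  have hsq : ∀ b, (s b * s (σ b)) • basisVec G (σ (σ b)) = - basisVec G b := by
    intro b
    rw [← Jc.j_squared, hJ, map_smul, hJ, smul_smul]
  have hinv : ∀ b, σ (σ b) = b := by
    intro b
    by_contra hne
    have := congrFun (hsq b) b
    simp [basisVec, Ne.symm hne] at this
  refine ⟨σ, s, ⟨fun _ _ => trivial, fun b _ => hinv b, fun b _ => ?_, fun b _ => hs b⟩, hJ⟩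
  have := congrFun (hsq b) b
  rw [hinv] at this
  simp only [basisVec, Pi.smul_apply, Pi.single_eq_same, Pi.neg_apply, smul_eq_mul] at this
  rcases hs b with h1 | h1 <;> rw [h1] at this ⊢ <;> linarith

section Necessity

variable {σ : V ⊕ G.edgeSet → V ⊕ G.edgeSet} {s : V ⊕ G.edgeSet → ℝ}

theorem AdaptedCS.nijenhuis_basisVec (Jc : AdaptedCS G)
    (hJ : ∀ b, Jc.J (basisVec G b) = s b • basisVec G (σ b)) (v w : V) :
    bracketVtx G v w + Jc.J (s (inl v) • bracket G (basisVec G (σ (inl v))) (basisVec G (inl w)) +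
      s (inl w) • bracket G (basisVec G (inl v)) (basisVec G (σ (inl w)))) -
      (s (inl v) * s (inl w)) •
        bracket G (basisVec G (σ (inl v))) (basisVec G (σ (inl w))) = 0 := by
  have h := Jc.integrable (basisVec G (inl v)) (basisVec G (inl w))
  rw [bracket_basisVec_inl, hJ, hJ] at h
  simpa only [← bracketHom_apply, map_smul, LinearMap.smul_apply, smul_smul,
    mul_comm (s (inl w))] using h

theorem AdaptedCS.isParent_or_isParent (Jc : AdaptedCS G) (hσ : IsSignedInvolution Set.univ σ s)
    (hJ : ∀ b, Jc.J (basisVec G b) = s b • basisVec G (σ b)) {v w : V} (hvw : G.Adj v w) :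
    IsParent σ v w ∨ IsParent σ w v := by
  by_contra hcon
  rw [not_or] at hcon
  have hN := Jc.nijenhuis_basisVec hJ v w
  rw [bracket_basisVec_eq_zero (b := σ (inl v)) (b' := inl w),
    bracket_basisVec_eq_zero (b := inl v) (b' := σ (inl w))] at hN
  · have hne : bracket G (basisVec G (σ (inl v))) (basisVec G (σ (inl w)))
        (inr ⟨s(v, w), hvw⟩) ≠ 0 := by
      intro h0
      have := congrFun hN (inr ⟨s(v, w), hvw⟩)
      simp only [smul_zero, add_zero, map_zero, Pi.sub_apply, Pi.smul_apply, h0, sub_zero] at this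
      exact (bracketVtx_apply_ne_zero_iff v w ⟨s(v, w), hvw⟩).2 rfl this
    rcases hv : σ (inl v) with v' | e
    · rcases hw : σ (inl w) with w' | e
      · rw [hv, hw, bracket_basisVec_inl, bracketVtx_apply_ne_zero_iff, Sym2.eq_iff] at hne
        rcases hne with ⟨h1, -⟩ | ⟨-, h1⟩
        · exact hσ.ne (Set.mem_univ (inl v)) (by rw [hv, h1])
        · exact hcon.1 ⟨hvw, v', hv, Or.inl h1⟩
      · rw [hw, bracket_basisVec_eq_zero (by simp)] at hne
        exact hne rfl
    · rw [hv, bracket_basisVec_inr_left] at hne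
      exact hne rfl
  · rintro i w' hi hw h
    cases hi
    exact hcon.2 ⟨hvw.symm, w', hw, Or.inr h.symm⟩
  · rintro v' j hv hj h
    cases hj
    exact hcon.1 ⟨hvw, v', hv, Or.inr h⟩

theorem AdaptedCS.eq_of_isParent_of_isParent (Jc : AdaptedCS G) (hG : G.IsAcyclic)
    (hσ : IsSignedInvolution Set.univ σ s)
    (hJ : ∀ b, Jc.J (basisVec G b) = s b • basisVec G (σ b)) {v w : V}
    (hv : IsParent σ v w) (hw : IsParent σ w v) : σ (inl v) = inl w := by
  obtain ⟨hvw, v', hv', rfl | hv'w⟩ := hv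
  · exact hv'
  obtain ⟨-, w', hw', rfl | hw'v⟩ := hw
  · rw [← hw', hσ.invol _ trivial]
  exfalso
  have hvv' : v ≠ v' := fun h => hσ.ne (Set.mem_univ (inl v)) (by rw [hv', h])
  have hww' : w ≠ w' := fun h => hσ.ne (Set.mem_univ (inl w)) (by rw [hw', h])
  have hN := Jc.nijenhuis_basisVec hJ v w
  have hnadj : ¬ G.Adj v' w' := fun h =>
    hww' (hG.eq_of_adj_of_adj hvv' hvw hv'w.symm hw'v.symm h.symm)
  simp only [hv', hw', bracket_basisVec_inl, bracketVtx_of_not_adj hnadj, smul_zero,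
    sub_zero] at hN
  have hN' := congrArg Jc.J hN
  rw [map_add, Jc.j_squared, map_zero, bracketVtx_of_adj hvw, map_smul, hJ, ← sub_eq_add_neg,
    sub_eq_zero] at hN'
  have hs : ∀ b, s b ≠ 0 := fun b => hσ.ne_zero trivial
  have hsame : ∀ b, (s (inl v) • bracketVtx G v' w + s (inl w) • bracketVtx G v w') b ≠ 0 →
      b = σ (inr ⟨s(v, w), hvw⟩) := by
    intro b hb
    by_contra hne
    rw [← hN'] at hb
    simp [basisVec, hne] at hb
  have hdist : s(v', w) ≠ s(v, w') := by
    rw [Ne, Sym2.eq_iff]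
    rintro (⟨h, -⟩ | ⟨-, h⟩)
    · exact hvv' h.symm
    · exact hvw.ne h.symm
  have h1 := hsame (inr ⟨s(v', w), hv'w⟩) (by
    have h0 := (bracketVtx_apply_ne_zero_iff v' w ⟨s(v', w), hv'w⟩).2 rfl
    have h0' := not_ne_iff.1 (mt (bracketVtx_apply_ne_zero_iff v w' ⟨s(v', w), hv'w⟩).1 hdist)
    simp [h0, h0', hs])
  have h2 := hsame (inr ⟨s(v, w'), hw'v.symm⟩) (by
    have h0 := (bracketVtx_apply_ne_zero_iff v w' ⟨s(v, w'), hw'v.symm⟩).2 rfl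
    have h0' := not_ne_iff.1
      (mt (bracketVtx_apply_ne_zero_iff v' w ⟨s(v, w'), hw'v.symm⟩).1 hdist.symm)
    simp [h0, h0', hs])
  rw [← h2] at h1
  exact hdist (congrArg Subtype.val (inr.inj h1))

theorem AdaptedCS.not_even_degree_of_isParent (Jc : AdaptedCS G) (hG : G.IsAcyclic)
    (hσ : IsSignedInvolution Set.univ σ s)
    (hJ : ∀ b, Jc.J (basisVec G b) = s b • basisVec G (σ b)) {c p : V} (hp : IsParent σ c p) :
    ¬ Even (G.degree c) := by
  have hchild : ∀ w ∈ (G.neighborFinset c).erase p, ∃ w', σ (inl w) = inl w' ∧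
      w' ∈ (G.neighborFinset c).erase p := by
    intro w hw
    rw [Finset.mem_erase, SimpleGraph.mem_neighborFinset] at hw
    obtain ⟨hwp, hcw⟩ := hw
    have hnot : ¬ IsParent σ c w := fun h => hwp (h.unique hG hσ hp)
    have hpar : IsParent σ w c := (Jc.isParent_or_isParent hσ hJ hcw).resolve_left hnot
    obtain ⟨-, w', hw', h | h⟩ := hpar
    · subst h
      exact (hnot ⟨hcw, w, by rw [← hw', hσ.invol _ trivial], Or.inl rfl⟩).elim
    · refine ⟨w', hw', ?_⟩
      rw [Finset.mem_erase, SimpleGraph.mem_neighborFinset]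
      refine ⟨?_, h.symm⟩
      rintro rfl
      have hw'' : σ (inl w') = inl w := by rw [← hw', hσ.invol _ trivial]
      have hback : IsParent σ w' c := ⟨h, w, hw'', Or.inr hcw.symm⟩
      have := Jc.eq_of_isParent_of_isParent hG hσ hJ hback hp
      rw [hw''] at this
      exact hcw.ne (inl.inj this).symm
  have heven : Even ((G.neighborFinset c).erase p).card := by
    refine Finset.even_card_of_forall_involution _
      (fun w => (σ (inl w)).elim id (fun _ => w)) ?_ ?_ ?_
    · intro w hw
      obtain ⟨w', h, h'⟩ := hchild w hw
      simpa [h] using h'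
    · intro w hw heq
      obtain ⟨w', h, h'⟩ := hchild w hw
      simp only [h, Sum.elim_inl, id] at heq
      exact hσ.ne (Set.mem_univ (inl w)) (by rw [h, heq])
    · intro w hw
      obtain ⟨w', h, h'⟩ := hchild w hw
      have : σ (inl w') = inl w := by rw [← h, hσ.invol _ trivial]
      simp [h, this]
  have hmem : p ∈ G.neighborFinset c := (G.mem_neighborFinset c p).2 hp.1
  rw [← G.card_neighborFinset_eq_degree, ← Finset.card_erase_add_one hmem]
  exact Nat.not_even_iff_odd.2 heven.add_one

theorem AdaptedCS.eq_of_even_degree (Jc : AdaptedCS G) (hG : G.IsAcyclic) {v w : V}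
    (hvw : G.Reachable v w) (hv : Even (G.degree v)) (hw : Even (G.degree w)) : v = w := by
  obtain ⟨σ, s, hσ, hJ⟩ := Jc.exists_isSignedInvolution
  obtain ⟨P, hP⟩ := hvw.exists_isPath
  refine (eq_or_exists_isParent_of_isPath hG hσ
    (fun _ _ => Jc.isParent_or_isParent hσ hJ) P hP ?_).resolve_right ?_
  · exact fun z hz => (Jc.not_even_degree_of_isParent hG hσ hJ hz hv).elim
  · exact fun ⟨z, hz⟩ => Jc.not_even_degree_of_isParent hG hσ hJ hz hw

theorem AdaptedCS.even_card (Jc : AdaptedCS G) : Even (Fintype.card (V ⊕ G.edgeSet)) := by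
  obtain ⟨σ, s, hσ, -⟩ := Jc.exists_isSignedInvolution
  exact IsSignedInvolution.even_card (S := Finset.univ) (by simpa using hσ)

end Necessity

/-- A signed involution of the vertices of odd degree extends to all vertices and edges,
compatibly with the brackets of vertices with their parents. -/
theorem IsParentFun.exists_extension {q : V → V} (hq : IsParentFun G q)
    (hcard : Even (Fintype.card (V ⊕ G.edgeSet))) {σ : V → V} {s : V → ℝ}
    (hσ : IsSignedInvolution {w | ¬ Even (G.degree w)} σ s)
    (hchild : ∀ w, ¬ Even (G.degree w) → ¬ IsMutual G q w →
      ¬ IsMutual G q (σ w) ∧ q (σ w) = q w) :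
    ∃ (σ' : V ⊕ G.edgeSet → V ⊕ G.edgeSet) (s' : V ⊕ G.edgeSet → ℝ),
      IsSignedInvolution Set.univ σ' s' ∧
      (∀ w, ¬ Even (G.degree w) → σ' (inl w) = inl (σ w) ∧ s' (inl w) = s w) ∧
      ∀ w, ¬ Even (G.degree w) → ¬ IsMutual G q w → ∀ (h : G.Adj (q w) w) (h' : G.Adj (q w) (σ w)),
        σ' (inr ⟨s(q w, w), h⟩) = inr ⟨s(q w, σ w), h'⟩ ∧
        s' (inr ⟨s(q w, w), h⟩) =
          s w * (if q w < w then 1 else -1) * (if q w < σ w then 1 else -1) := by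
  classical
  have hch : ∀ e : G.edgeSet, ∃ w, ¬ Even (G.degree w) ∧ (e : Sym2 V) = s(q w, w) := by
    rintro ⟨e, he⟩
    induction e using Sym2.ind with
    | _ v w =>
      rcases hq.cover v w he with ⟨h1, rfl⟩ | ⟨h1, rfl⟩
      · exact ⟨v, h1, Sym2.eq_swap⟩
      · exact ⟨w, h1, rfl⟩
  choose ch hodd hedge using hch
  have hchu : ∀ (e : G.edgeSet) w, ¬ Even (G.degree w) → ¬ IsMutual G q w →
      (e : Sym2 V) = s(q w, w) → ch e = w := by
    intro e w hw hm he
    have h := hedge e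
    rw [he, Sym2.eq_iff] at h
    rcases h with ⟨-, h⟩ | ⟨h1, h2⟩
    · exact h.symm
    · refine (hm ⟨hw, ?_, ?_⟩).elim
      · rw [h1]; exact hodd e
      · rw [h1]; exact h2.symm
  have hadj : ∀ w, ¬ Even (G.degree w) → ¬ IsMutual G q w → G.Adj (q w) (σ w) := by
    intro w hw hm
    have h := hq.adj (σ w) (hσ.mem w hw)
    rw [(hchild w hw hm).2] at h
    exact h.symm
  let η : V → ℝ := fun w => if q w < w then 1 else -1
  have hη : ∀ w, η w = 1 ∨ η w = -1 := by
    intro w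
    simp only [η]
    split_ifs <;> simp
  let σE : G.edgeSet → G.edgeSet := fun e =>
    if h : G.Adj (q (ch e)) (σ (ch e)) then ⟨s(q (ch e), σ (ch e)), h⟩ else e
  let sE : G.edgeSet → ℝ := fun e => s (ch e) * η (ch e) * η (σ (ch e))
  have hσE : ∀ e, ¬ IsMutual G q (ch e) →
      (σE e : Sym2 V) = s(q (ch e), σ (ch e)) ∧ ch (σE e) = σ (ch e) := by
    intro e he
    have h := hadj _ (hodd e) he
    have h1 : (σE e : Sym2 V) = s(q (ch e), σ (ch e)) := by simp [σE, h]
    refine ⟨h1, hchu _ _ (hσ.mem _ (hodd e)) (hchild _ (hodd e) he).1 ?_⟩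
    rw [h1, (hchild _ (hodd e) he).2]
  let S : Finset (V ⊕ G.edgeSet) := Finset.univ.filter
    (Sum.elim (fun w => ¬ Even (G.degree w)) (fun e => ¬ IsMutual G q (ch e)))
  have hS : IsSignedInvolution (S : Set (V ⊕ G.edgeSet))
      (Sum.elim (inl ∘ σ) (inr ∘ σE)) (Sum.elim s sE) := by
    have hl : ∀ w, inl w ∈ (S : Set (V ⊕ G.edgeSet)) ↔ ¬ Even (G.degree w) := by simp [S]
    have hr : ∀ e, inr e ∈ (S : Set (V ⊕ G.edgeSet)) ↔ ¬ IsMutual G q (ch e) := by simp [S]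
    refine ⟨?_, ?_, ?_, ?_⟩
    · rintro (w | e) h
      · rw [hl] at h
        exact (hl _).2 (hσ.mem w h)
      · rw [hr] at h
        refine (hr _).2 ?_
        rw [(hσE e h).2]
        exact (hchild _ (hodd e) h).1
    · rintro (w | e) h
      · rw [hl] at h
        exact congrArg inl (hσ.invol w h)
      · rw [hr] at h
        refine congrArg inr (Subtype.ext ?_)
        have h' : ¬ IsMutual G q (ch (σE e)) := by
          rw [(hσE e h).2]
          exact (hchild _ (hodd e) h).1
        rw [(hσE _ h').1, (hσE e h).2, hσ.invol _ (hodd e), (hchild _ (hodd e) h).2, hedge e]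
    · rintro (w | e) h
      · rw [hl] at h
        exact hσ.neg w h
      · rw [hr] at h
        simp only [Sum.elim_inr, Function.comp, sE, (hσE e h).2, hσ.invol _ (hodd e),
          hσ.neg _ (hodd e)]
        ring
    · rintro (w | e) h
      · rw [hl] at h
        exact hσ.sign w h
      · simp only [Sum.elim_inr, sE]
        rcases hσ.sign _ (hodd e) with h1 | h1 <;> rcases hη (ch e) with h2 | h2 <;>
          rcases hη (σ (ch e)) with h3 | h3 <;> simp [h1, h2, h3]
  obtain ⟨σ', s', h', hext⟩ := hS.exists_extension hcard
  refine ⟨σ', s', h', fun w hw => ?_, fun w hw hm ha ha' => ?_⟩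
  · exact hext (inl w) (by simpa [S] using hw)
  · have hchw := hchu ⟨s(q w, w), ha⟩ w hw hm rfl
    have hm' : ¬ IsMutual G q (ch ⟨s(q w, w), ha⟩) := by rwa [hchw]
    obtain ⟨h1, h2⟩ := hext (inr ⟨s(q w, w), ha⟩) (by simpa [S] using hm')
    rw [h1, h2]
    constructor
    · refine congrArg inr (Subtype.ext ?_)
      rw [(hσE _ hm').1, hchw]
    · simp only [Sum.elim_inr, sE, hchw, η, (hchild w hw hm).2]

/-- The Nijenhuis tensor of an endomorphism of `𝔫_G`. -/
noncomputable def nijenhuis (J : Niln G →ₗ[ℝ] Niln G) : Niln G →ₗ[ℝ] Niln G →ₗ[ℝ] Niln G :=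
  bracketHom G + ((bracketHom G).compl₁₂ J LinearMap.id +
    (bracketHom G).compl₁₂ LinearMap.id J).compr₂ J - (bracketHom G).compl₁₂ J J

theorem nijenhuis_apply (J : Niln G →ₗ[ℝ] Niln G) (x y : Niln G) :
    nijenhuis J x y =
      bracket G x y + J (bracket G (J x) y + bracket G x (J y)) - bracket G (J x) (J y) := rfl

theorem nijenhuis_swap (J : Niln G →ₗ[ℝ] Niln G) (x y : Niln G) :
    nijenhuis J y x = - nijenhuis J x y := by
  simp only [nijenhuis_apply, bracket_swap x y, bracket_swap (J x) y, bracket_swap x (J y),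
    bracket_swap (J x) (J y), map_add, map_neg]
  abel

theorem nijenhuis_apply_left {J : Niln G →ₗ[ℝ] Niln G} (hJ : ∀ x, J (J x) = -x) (x y : Niln G) :
    nijenhuis J (J x) y = - J (nijenhuis J x y) := by
  simp only [nijenhuis_apply, hJ, map_add, map_sub]
  simp only [← bracketHom_apply, map_neg, LinearMap.neg_apply]
  abel

theorem nijenhuis_apply_self {J : Niln G →ₗ[ℝ] Niln G} (hJ : ∀ x, J (J x) = -x) (x : Niln G) :
    nijenhuis J (J x) x = 0 := by
  have hself : ∀ y : Niln G, bracket G y y = 0 := fun y => self_eq_neg.1 (bracket_swap y y)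
  have h : nijenhuis J x x = 0 := by
    simp [nijenhuis_apply, hself, bracket_swap x (J x)]
  rw [nijenhuis_apply_left hJ, h, map_zero, neg_zero]

section Integrability

variable {σ : V ⊕ G.edgeSet → V ⊕ G.edgeSet} {s : V ⊕ G.edgeSet → ℝ}

theorem nijenhuis_basisVec_left_iff (hσ : IsSignedInvolution Set.univ σ s) (b : V ⊕ G.edgeSet)
    (y : Niln G) : nijenhuis (signedPerm G σ s) (basisVec G (σ b)) y = 0 ↔
      nijenhuis (signedPerm G σ s) (basisVec G b) y = 0 := by
  have hinj : ∀ z, signedPerm G σ s z = 0 ↔ z = 0 := by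
    refine fun z => ⟨fun h => ?_, fun h => by rw [h, map_zero]⟩
    rw [← neg_eq_zero, ← signedPerm_signedPerm hσ, h, map_zero]
  have h := nijenhuis_apply_left (signedPerm_signedPerm hσ) (basisVec G b) y
  rw [signedPerm_basisVec hσ, map_smul, LinearMap.smul_apply] at h
  rw [← hinj (nijenhuis _ (basisVec G b) y), ← neg_eq_zero (a := signedPerm G σ s _), ← h,
    smul_eq_zero, or_iff_right (hσ.ne_zero trivial)]

theorem nijenhuis_basisVec_right_iff (hσ : IsSignedInvolution Set.univ σ s) (b : V ⊕ G.edgeSet)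
    (x : Niln G) : nijenhuis (signedPerm G σ s) x (basisVec G (σ b)) = 0 ↔
      nijenhuis (signedPerm G σ s) x (basisVec G b) = 0 := by
  rw [nijenhuis_swap, neg_eq_zero, nijenhuis_basisVec_left_iff hσ, nijenhuis_swap, neg_eq_zero]

/-- A signed involution of the basis of `𝔫_G` defines an adapted complex structure as soon as the
Nijenhuis tensor vanishes on pairs of adjacent vertices. -/
theorem nonempty_adaptedCS (hσ : IsSignedInvolution Set.univ σ s)
    (hN : ∀ v w, G.Adj v w →
      nijenhuis (signedPerm G σ s) (basisVec G (inl v)) (basisVec G (inl w)) = 0) :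
    Nonempty (AdaptedCS G) := by
  have hbasis : ∀ b b', nijenhuis (signedPerm G σ s) (basisVec G b) (basisVec G b') = 0 := by
    intro b b'
    by_cases h₁ : ∃ i j, b = inl i ∧ b' = inl j ∧ G.Adj i j
    · obtain ⟨i, j, rfl, rfl, h⟩ := h₁
      exact hN i j h
    by_cases h₂ : ∃ i j, σ b = inl i ∧ b' = inl j ∧ G.Adj i j
    · obtain ⟨i, j, hb, rfl, h⟩ := h₂
      rw [← nijenhuis_basisVec_left_iff hσ, hb]
      exact hN i j h
    by_cases h₃ : ∃ i j, b = inl i ∧ σ b' = inl j ∧ G.Adj i j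
    · obtain ⟨i, j, rfl, hb, h⟩ := h₃
      rw [← nijenhuis_basisVec_right_iff hσ, hb]
      exact hN i j h
    by_cases h₄ : ∃ i j, σ b = inl i ∧ σ b' = inl j ∧ G.Adj i j
    · obtain ⟨i, j, hb, hb', h⟩ := h₄
      rw [← nijenhuis_basisVec_right_iff hσ, ← nijenhuis_basisVec_left_iff hσ, hb, hb']
      exact hN i j h
    have hz : ∀ {c c' : V ⊕ G.edgeSet}, (¬ ∃ i j, c = inl i ∧ c' = inl j ∧ G.Adj i j) →
        bracketHom G (basisVec G c) (basisVec G c') = 0 := fun h =>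
      bracket_basisVec_eq_zero fun i j hi hj hij => h ⟨i, j, hi, hj, hij⟩
    rw [nijenhuis_apply, signedPerm_basisVec hσ, signedPerm_basisVec hσ]
    simp only [← bracketHom_apply, map_smul, LinearMap.smul_apply, hz h₁, hz h₂, hz h₃, hz h₄,
      smul_zero, add_zero, map_zero, sub_zero]
  have hzero : nijenhuis (signedPerm G σ s) = 0 := by
    refine (Pi.basisFun ℝ (V ⊕ G.edgeSet)).ext fun b =>
      (Pi.basisFun ℝ (V ⊕ G.edgeSet)).ext fun b' => ?_
    rw [Pi.basisFun_apply, Pi.basisFun_apply]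
    exact hbasis b b'
  refine ⟨⟨signedPerm G σ s, signedPerm_signedPerm hσ, fun x y => ?_, fun b => ?_⟩⟩
  · rw [← nijenhuis_apply, hzero]
    rfl
  · rw [signedPerm_basisVec hσ]
    rcases hσ.sign b trivial with h | h
    · exact Or.inl ⟨σ b, by rw [h, one_smul]⟩
    · exact Or.inr ⟨σ b, by rw [h, neg_one_smul]⟩

end Integrability

theorem IsParentFun.nonempty_adaptedCS {q : V → V} (hq : IsParentFun G q)
    (hcard : Even (Fintype.card (V ⊕ G.edgeSet))) : Nonempty (AdaptedCS G) := by
  obtain ⟨τ, t, hτ, hmutual, hchild⟩ := hq.exists_isSignedInvolution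
  obtain ⟨σ, s, hσ, hvert, hedge⟩ := hq.exists_extension hcard hτ hchild
  refine GraphLie.nonempty_adaptedCS hσ ?_
  set J := signedPerm G σ s with hJdef
  have hJJ : ∀ x, J (J x) = -x := signedPerm_signedPerm hσ
  have hJ : ∀ b, J (basisVec G b) = s b • basisVec G (σ b) := signedPerm_basisVec hσ
  -- The partner of the parent of `w` is not adjacent to `w`, unless `w` and its parent are mutual.
  have hnadj : ∀ w u, ¬ Even (G.degree w) → ¬ IsMutual G q w → σ (inl (q w)) = inl u →
      ¬ G.Adj u w := by
    intro w u hw hm hu hadj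
    rcases hq.cover u w hadj with ⟨hu', rfl⟩ | ⟨-, h⟩
    · have h1 : σ (inl u) = inl (q (q u)) := by rw [← hu, hσ.invol _ trivial]
      have h2 : τ u = q (q u) := inl.inj ((hvert u hu').1.symm.trans h1)
      by_cases hmu : IsMutual G q u
      · exact hm hmu.apply
      · refine hm ⟨hw, ?_, ?_⟩
        · rw [← h2]
          exact hτ.mem u hu'
        · rw [← h2]
          exact (hchild u hu' hmu).2
    · exact hσ.ne (Set.mem_univ (inl (q w))) (by rw [hu, h])
  have hparent : ∀ w, ¬ Even (G.degree w) →
      nijenhuis J (basisVec G (inl (q w))) (basisVec G (inl w)) = 0 := by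
    intro w hw
    by_cases hm : IsMutual G q w
    · have h : σ (inl w) = inl (q w) := by rw [(hvert w hw).1, hmutual w hm]
      have h0 := nijenhuis_apply_self hJJ (basisVec G (inl w))
      rw [hJ, h, map_smul, LinearMap.smul_apply, smul_eq_zero] at h0
      exact h0.resolve_left (hσ.ne_zero trivial)
    · have hm' := hchild w hw hm
      have hw' : ¬ Even (G.degree (τ w)) := hτ.mem w hw
      have ha : G.Adj (q w) w := (hq.adj w hw).symm
      have ha' : G.Adj (q w) (τ w) := hm'.2 ▸ (hq.adj (τ w) hw').symm
      obtain ⟨he, hs⟩ := hedge w hw hm ha ha'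
      have hJbr : J (bracketVtx G (q w) w) = t w • bracketVtx G (q w) (τ w) := by
        rw [bracketVtx_of_adj ha, bracketVtx_of_adj ha', map_smul, hJ, he, hs, smul_smul, smul_smul]
        congr 1
        split_ifs <;> ring
      have h1 : bracketHom G (basisVec G (σ (inl (q w)))) (basisVec G (inl w)) = 0 :=
        bracket_basisVec_eq_zero fun i j hi hj => by
          cases hj
          exact hnadj w i hw hm hi
      have h2 : bracketHom G (basisVec G (σ (inl (q w)))) (basisVec G (inl (τ w))) = 0 :=
        bracket_basisVec_eq_zero fun i j hi hj => by
          cases hj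
          exact hnadj (τ w) i hw' hm'.1 (by rw [hm'.2, hi])
      rw [nijenhuis_apply, hJ, hJ, (hvert w hw).1, (hvert w hw).2]
      simp only [← bracketHom_apply, map_smul, LinearMap.smul_apply, h1, h2, smul_zero, zero_add,
        sub_zero]
      rw [bracketHom_apply, bracketHom_apply, bracket_basisVec_inl, bracket_basisVec_inl,
        ← map_smul, ← hJbr, hJJ, add_neg_cancel]
  intro v w h
  rcases hq.cover v w h with ⟨hv, rfl⟩ | ⟨hw, rfl⟩
  · rw [nijenhuis_swap, hparent v hv, neg_zero]
  · exact hparent w hw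

end GraphLie

namespace GraphLie

/-- A forest `G` (a finite simple graph with no cycles) admits an
adapted complex structure if and only if it has an even number of connected components
and each connected component contains at most one vertex of even degree. -/
theorem statement19 {V : Type*} [Fintype V] [LinearOrder V] (G : SimpleGraph V)
    [DecidableRel G.Adj] (hG : G.IsAcyclic) :
    Nonempty (AdaptedCS G) ↔
      (Even (Nat.card G.ConnectedComponent) ∧
       ∀ v w : V, G.Reachable v w → Even (G.degree v) → Even (G.degree w) → v = w) := by
  have hcard : Even (Fintype.card (V ⊕ G.edgeSet)) ↔ Even (Nat.card G.ConnectedComponent) := by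
    rw [← Nat.card_eq_fintype_card, Nat.card_sum, ← hG.card_edgeSet_add_card_connectedComponent]
    simp only [Nat.even_add]
    tauto
  constructor
  · rintro ⟨Jc⟩
    exact ⟨hcard.1 Jc.even_card, fun v w => Jc.eq_of_even_degree hG⟩
  · rintro ⟨hcomp, huniq⟩
    obtain ⟨q, hq⟩ := exists_isParentFun hG huniq
    exact hq.nonempty_adaptedCS (hcard.2 hcomp)

end GraphLie
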